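/- arXiv:2106.09211 — 2 statements merged into one kernel-verified Lean document; each statement's English description precedes it below -/
import Mathlib

section
/- Let n1 ≥ n2 ≥ 1, let L0 ∈ ℝ^{n1×n2} have rank r ≤ n2/10 with compact SVD L0 = UΣVᵀ (U, V with orthonormal columns), let S0 vanish off Ω and be nonzero on Ω, let Z0 ∈ ℝ^{n1×n2}, and set D = L0 + S0 + Z0, λ = 1/√n1, μ = √(n2/2). Suppose there exist W, F, H ∈ ℝ^{n1×n2} with UVᵀ + W = λ(sign(S0) + F + P_Ω H), W ∈ T⊥, ‖W‖ ≤ 1/2, P_Ω F = 0, ‖F‖_∞ ≤ 1/2, and ‖P_Ω H‖_F ≤ 1/(260√2). Let (L̂, Ŝ) be a minimizer of the √PCP problem with these λ, μ, and put δ := ‖L̂ + Ŝ − D‖_F. Assume further that: (i) if δ ≥ ‖Z0‖_F, then every minimizer (L, S) of StablePCP_c(δ) with this λ satisfies ‖(L, S) − (L0, S0)‖_F ≤ √(320·n1·n2 + 4)·δ; and (ii) if δ ≤ ‖Z0‖_F, then every minimizer (L, S) of StablePCP_c(δ) satisfies ‖(L, S) − (L0, S0)‖_F ≤ √(720·n1·n2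 + 2)·‖Z0‖_F. Then ‖(L̂, Ŝ) − (L0, S0)‖_F ≤ 560·√(n1·n2)·‖Z0‖_F. -/
open Matrix
open scoped BigOperators

/-- Frobenius norm of a real matrix. -/
noncomputable def frob {n1 n2 : ℕ} (A : Matrix (Fin n1) (Fin n2) ℝ) : ℝ :=
  Real.sqrt (∑ i, ∑ j, A i j ^ 2)

/-- Entrywise ℓ¹ norm. -/
noncomputable def l1norm {n1 n2 : ℕ} (A : Matrix (Fin n1) (Fin n2) ℝ) : ℝ :=
  ∑ i, ∑ j, |A i j|

/-- Trace inner product ⟨A,B⟩ = trace(AᵀB). -/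
noncomputable def minner {n1 n2 : ℕ} (A B : Matrix (Fin n1) (Fin n2) ℝ) : ℝ :=
  ∑ i, ∑ j, A i j * B i j

/-- Spectral norm (largest singular value), as the ℓ²→ℓ² operator norm. -/
noncomputable def spec {n1 n2 : ℕ} (A : Matrix (Fin n1) (Fin n2) ℝ) : ℝ :=
  sSup {c : ℝ | ∃ x : Fin n2 → ℝ, (∑ j, x j ^ 2) ≤ 1 ∧
    c = Real.sqrt (∑ i, (∑ j, A i j * x j) ^ 2)}

/-- Nuclear norm (sum of singular values), via duality with the spectral norm. -/
noncomputable def nuc {n1 n2 : ℕ} (A : Matrix (Fin n1) (Fin n2) ℝ) : ℝ :=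
  sSup {c : ℝ | ∃ B : Matrix (Fin n1) (Fin n2) ℝ, spec B ≤ 1 ∧ c = minner A B}

/-- P_Ω: the matrix agreeing with `M` on `Ω` and zero off `Ω`. -/
noncomputable def projS {n1 n2 : ℕ} (Ω : Finset (Fin n1 × Fin n2))
    (M : Matrix (Fin n1) (Fin n2) ℝ) : Matrix (Fin n1) (Fin n2) ℝ :=
  Matrix.of fun i j => if (i, j) ∈ Ω then M i j else 0

/-- Entrywise sign matrix. -/
noncomputable def signM {n1 n2 : ℕ} (A : Matrix (Fin n1) (Fin n2) ℝ) :
    Matrix (Fin n1) (Fin n2) ℝ :=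
  Matrix.of fun i j => Real.sign (A i j)

/-- The tangent space T = {UQᵀ + RVᵀ}. -/
def memT {n1 n2 r : ℕ} (U : Matrix (Fin n1) (Fin r) ℝ) (V : Matrix (Fin n2) (Fin r) ℝ)
    (M : Matrix (Fin n1) (Fin n2) ℝ) : Prop :=
  ∃ (Q : Matrix (Fin n2) (Fin r) ℝ) (R : Matrix (Fin n1) (Fin r) ℝ), M = U * Qᵀ + R * Vᵀ

/-- Membership in T⊥, the orthogonal complement of the tangent space. -/
def memTperp {n1 n2 r : ℕ} (U : Matrix (Fin n1) (Fin r) ℝ) (V : Matrix (Fin n2) (Fin r) ℝ)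
    (W : Matrix (Fin n1) (Fin n2) ℝ) : Prop :=
  ∀ M, memT U V M → minner W M = 0

/-- (L̂, Ŝ) is a global minimizer of the √PCP objective
`‖L‖_* + λ‖S‖₁ + μ‖L + S − D‖_F`. -/
def IsRootPCPMin {n1 n2 : ℕ} (D : Matrix (Fin n1) (Fin n2) ℝ) (lam mu : ℝ)
    (Lh Sh : Matrix (Fin n1) (Fin n2) ℝ) : Prop :=
  ∀ L S : Matrix (Fin n1) (Fin n2) ℝ,
    nuc Lh + lam * l1norm Sh + mu * frob (Lh + Sh - D) ≤
      nuc L + lam * l1norm S + mu * frob (L + S - D)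

/-- (L̂, Ŝ) is a minimizer of StablePCP_c(δ):
minimize `‖L‖_* + λ‖S‖₁` subject to `‖L + S − D‖_F ≤ δ`. -/
def IsStablePCPMin {n1 n2 : ℕ} (D : Matrix (Fin n1) (Fin n2) ℝ) (lam δ : ℝ)
    (Lh Sh : Matrix (Fin n1) (Fin n2) ℝ) : Prop :=
  frob (Lh + Sh - D) ≤ δ ∧
    ∀ L S : Matrix (Fin n1) (Fin n2) ℝ, frob (L + S - D) ≤ δ →
      nuc Lh + lam * l1norm Sh ≤ nuc L + lam * l1norm S

/-- Frobenius distance between pairs: ‖(L,S) − (L',S')‖_F. -/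
noncomputable def pairDist {n1 n2 : ℕ} (L S L' S' : Matrix (Fin n1) (Fin n2) ℝ) : ℝ :=
  Real.sqrt (frob (L - L') ^ 2 + frob (S - S') ^ 2)

/-- Sample space of the random sparsity model: a uniformly random support of
cardinality m together with iid uniform random signs. -/
abbrev SampleSpace (n1 n2 m : ℕ) : Type :=
  {Ω : Finset (Fin n1 × Fin n2) // Ω.card = m} × ((Fin n1 × Fin n2) → Bool)

/-- The sparse matrix S0 built from fixed magnitudes `a` and a random sample:
S0 vanishes off Ω and equals ±a on Ω according to the random signs. -/
noncomputable def sparseOf {n1 n2 m : ℕ} (a : Fin n1 × Fin n2 → ℝ) (ω : SampleSpace n1 n2 m) :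
    Matrix (Fin n1) (Fin n2) ℝ :=
  Matrix.of fun i j =>
    if (i, j) ∈ ω.1.1 then (if ω.2 (i, j) then a (i, j) else -a (i, j)) else 0

open Classical in
/-- Uniform probability of an event on a finite sample space. -/
noncomputable def unifProb {α : Type*} [Fintype α] (E : α → Prop) : ℝ :=
  ((Finset.univ.filter fun a => E a).card : ℝ) / (Fintype.card α : ℝ)

/-!
`U Vᵀ + W` is a subgradient of the nuclear norm at `L0`, `sign S0 + F` is a subgradient of the `ℓ¹`
norm at `S0`, and the certificate says that the first is `λ` times the second up to the small
matrix `λ P_Ω H`. Adding the two subgradient inequalities at a √PCP minimizer with residual norm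
`δ` cancels everything except pairings with the residual, the noise and `P_Ω H`:
`μ δ ≤ μ ‖Z0‖ + (δ + ‖Z0‖) ‖U Vᵀ + W‖ + λ ‖Ŝ - S0‖ ‖P_Ω H‖`.

A √PCP minimizer also solves the constrained problem at level `δ`. If `δ ≤ ‖Z0‖`, assumption (ii)
is the claim. Otherwise assumption (i) bounds `‖Ŝ - S0‖` by a multiple of `δ`, and since
`‖U Vᵀ + W‖ < μ` with room to spare, all the terms in `δ` on the right are absorbed on the left,
so `δ` is at most a constant times `‖Z0‖`.
-/

section InnerProduct

variable {n1 n2 : ℕ}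

theorem minner_eq_trace (A B : Matrix (Fin n1) (Fin n2) ℝ) : minner A B = (Aᵀ * B).trace := by
  simp only [minner, trace, diag, mul_apply, transpose_apply]
  exact Finset.sum_comm

theorem minner_comm (A B : Matrix (Fin n1) (Fin n2) ℝ) : minner A B = minner B A := by
  simp only [minner, mul_comm]

theorem minner_add_left (A B C : Matrix (Fin n1) (Fin n2) ℝ) :
    minner (A + B) C = minner A C + minner B C := by
  simp [minner_eq_trace, Matrix.add_mul]

theorem minner_sub_left (A B C : Matrix (Fin n1) (Fin n2) ℝ) :
    minner (A - B) C = minner A C - minner B C := by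
  simp [minner_eq_trace, Matrix.sub_mul]

theorem minner_add_right (A B C : Matrix (Fin n1) (Fin n2) ℝ) :
    minner A (B + C) = minner A B + minner A C := by
  simp [minner_eq_trace, Matrix.mul_add]

theorem minner_smul_right (c : ℝ) (A B : Matrix (Fin n1) (Fin n2) ℝ) :
    minner A (c • B) = c * minner A B := by
  simp [minner_eq_trace]

theorem minner_eq_inner_vec (A B : Matrix (Fin n1) (Fin n2) ℝ) :
    minner A B = inner ℝ (WithLp.toLp 2 (vec A)) (WithLp.toLp 2 (vec B)) := by
  rw [EuclideanSpace.inner_toLp_toLp, star_trivial, vec_dotProduct_vec, minner_comm,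
    minner_eq_trace]

theorem frob_sq (A : Matrix (Fin n1) (Fin n2) ℝ) : frob A ^ 2 = minner A A := by
  rw [frob, Real.sq_sqrt (by positivity)]
  simp only [minner, sq]

theorem frob_nonneg (A : Matrix (Fin n1) (Fin n2) ℝ) : 0 ≤ frob A :=
  Real.sqrt_nonneg _

theorem frob_eq_norm_vec (A : Matrix (Fin n1) (Fin n2) ℝ) :
    frob A = ‖WithLp.toLp 2 (vec A)‖ := by
  rw [← sq_eq_sq₀ (frob_nonneg A) (norm_nonneg _), frob_sq, minner_eq_inner_vec,
    real_inner_self_eq_norm_sq]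

theorem frob_neg (A : Matrix (Fin n1) (Fin n2) ℝ) : frob (-A) = frob A := by
  simp [frob]

theorem frob_add_le (A B : Matrix (Fin n1) (Fin n2) ℝ) : frob (A + B) ≤ frob A + frob B := by
  simpa only [frob_eq_norm_vec, vec_add, WithLp.toLp_add] using norm_add_le _ _

theorem abs_minner_le (A B : Matrix (Fin n1) (Fin n2) ℝ) : |minner A B| ≤ frob A * frob B := by
  simpa only [frob_eq_norm_vec, minner_eq_inner_vec] using abs_real_inner_le_norm _ _

theorem frob_le_pairDist (L S L' S' : Matrix (Fin n1) (Fin n2) ℝ) :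
    frob (S - S') ≤ pairDist L S L' S' :=
  Real.le_sqrt_of_sq_le (le_add_of_nonneg_left (sq_nonneg _))

end InnerProduct

section SpectralNorm

variable {n1 n2 : ℕ}

theorem norm_toLp_sq {n : ℕ} (x : Fin n → ℝ) : ‖WithLp.toLp 2 x‖ ^ 2 = x ⬝ᵥ x := by
  rw [← real_inner_self_eq_norm_sq, EuclideanSpace.inner_toLp_toLp, star_trivial]

open scoped Matrix.Norms.L2Operator in
theorem spec_eq_l2_opNorm (A : Matrix (Fin n1) (Fin n2) ℝ) : spec A = ‖A‖ := by
  rw [l2_opNorm_def, ← ContinuousLinearMap.sSup_unitClosedBall_eq_norm, spec]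
  congr 1
  ext c
  simp only [Set.mem_image, mem_closedBall_zero_iff, Set.mem_ofPred_eq,
    (WithLp.toLp_surjective 2).exists, EuclideanSpace.norm_eq, Real.sqrt_le_one,
    Real.norm_eq_abs, sq_abs, eq_comm]
  rfl

open scoped Matrix.Norms.L2Operator in
theorem spec_le_iff_dotProduct_mulVec_le {A : Matrix (Fin n1) (Fin n2) ℝ} {c : ℝ} (hc : 0 ≤ c) :
    spec A ≤ c ↔ ∀ x, (A *ᵥ x) ⬝ᵥ (A *ᵥ x) ≤ c ^ 2 * (x ⬝ᵥ x) := by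
  rw [spec_eq_l2_opNorm, l2_opNorm_def, ContinuousLinearMap.opNorm_le_iff hc,
    (WithLp.toLp_surjective 2).forall]
  refine forall_congr' fun x => ?_
  rw [← norm_toLp_sq, ← norm_toLp_sq, ← mul_pow, sq_le_sq₀ (norm_nonneg _) (by positivity)]
  rfl

theorem spec_le_iff_posSemidef {A : Matrix (Fin n1) (Fin n2) ℝ} {c : ℝ} (hc : 0 ≤ c) :
    spec A ≤ c ↔ (c ^ 2 • 1 - Aᵀ * A).PosSemidef := by
  have hquad (x : Fin n2 → ℝ) : star x ⬝ᵥ (c ^ 2 • 1 - Aᵀ * A) *ᵥ x =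
      c ^ 2 * (x ⬝ᵥ x) - (A *ᵥ x) ⬝ᵥ (A *ᵥ x) := by
    rw [star_trivial, sub_mulVec, dotProduct_sub, smul_mulVec, one_mulVec, dotProduct_smul,
      smul_eq_mul, ← mulVec_mulVec, dotProduct_mulVec x, vecMul_transpose]
  have hherm : (c ^ 2 • 1 - Aᵀ * A).IsHermitian := by
    simp [IsHermitian, conjTranspose_eq_transpose_of_trivial]
  simp only [spec_le_iff_dotProduct_mulVec_le hc, posSemidef_iff_dotProduct_mulVec, hherm, hquad,
    true_and, sub_nonneg]

theorem spec_zero_le_one : spec (0 : Matrix (Fin n1) (Fin n2) ℝ) ≤ 1 := by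
  simpa [spec_le_iff_posSemidef] using PosSemidef.one

theorem frob_sq_le_of_spec_le {A : Matrix (Fin n1) (Fin n2) ℝ} {c : ℝ} (hc : 0 ≤ c)
    (h : spec A ≤ c) : frob A ^ 2 ≤ c ^ 2 * n2 := by
  have htrace := ((spec_le_iff_posSemidef hc).1 h).trace_nonneg
  rw [trace_sub, trace_smul, trace_one, Fintype.card_fin, smul_eq_mul, ← minner_eq_trace,
    ← frob_sq] at htrace
  exact sub_nonneg.1 htrace

theorem posSemidef_smul_gram_sub_gram_mul {r : ℕ} {A : Matrix (Fin n1) (Fin n2) ℝ} {c : ℝ}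
    (hc : 0 ≤ c) (hA : spec A ≤ c) (Q : Matrix (Fin n2) (Fin r) ℝ) :
    (c ^ 2 • (Qᵀ * Q) - (A * Q)ᵀ * (A * Q)).PosSemidef := by
  simpa [Matrix.mul_sub, Matrix.sub_mul, Matrix.mul_assoc] using
    ((spec_le_iff_posSemidef hc).1 hA).conjTranspose_mul_mul_same Q

end SpectralNorm

section Subgradient

/-- `G` is a subgradient of `f` at `A` for the trace inner product. -/
def IsSubgradient {n1 n2 : ℕ} (f : Matrix (Fin n1) (Fin n2) ℝ → ℝ)
    (A G : Matrix (Fin n1) (Fin n2) ℝ) : Prop :=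
  ∀ M, f A + minner (M - A) G ≤ f M

variable {n1 n2 r : ℕ}

theorem isSubgradient_l1norm {S F : Matrix (Fin n1) (Fin n2) ℝ}
    (hsupp : ∀ i j, S i j ≠ 0 → F i j = 0) (hF : ∀ i j, |F i j| ≤ 1) :
    IsSubgradient l1norm S (signM S + F) := by
  intro M
  simp only [l1norm, minner, ← Finset.sum_add_distrib]
  refine Finset.sum_le_sum fun i _ => Finset.sum_le_sum fun j _ => ?_
  change |S i j| + (M i j - S i j) * ((S i j).sign + F i j) ≤ |M i j|
  rcases lt_trichotomy (S i j) 0 with hneg | hzero | hpos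
  · rw [hsupp i j hneg.ne, Real.sign_of_neg hneg, abs_of_neg hneg]
    linarith [neg_le_abs (M i j)]
  · rw [hzero, Real.sign_zero, abs_zero, zero_add, zero_add, sub_zero]
    calc M i j * F i j ≤ |M i j| * |F i j| := (le_abs_self _).trans_eq (abs_mul _ _)
      _ ≤ |M i j| := mul_le_of_le_one_right (abs_nonneg _) (hF i j)
  · rw [hsupp i j hpos.ne', Real.sign_of_pos hpos, abs_of_pos hpos]
    linarith [le_abs_self (M i j)]

theorem isSubgradient_l1norm_of_projS_eq_zero {S F : Matrix (Fin n1) (Fin n2) ℝ}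
    {Ω : Finset (Fin n1 × Fin n2)} (hS : ∀ p : Fin n1 × Fin n2, S p.1 p.2 ≠ 0 → p ∈ Ω)
    (hFΩ : projS Ω F = 0) (hF : ∀ i j, |F i j| ≤ 1) : IsSubgradient l1norm S (signM S + F) := by
  refine isSubgradient_l1norm (fun i j hij => ?_) hF
  simpa [projS, hS (i, j) hij] using congrFun₂ hFΩ i j

theorem minner_le_nuc (A : Matrix (Fin n1) (Fin n2) ℝ) {B : Matrix (Fin n1) (Fin n2) ℝ}
    (hB : spec B ≤ 1) : minner A B ≤ nuc A := by
  refine le_csSup ⟨frob A * √n2, ?_⟩ ⟨B, hB, rfl⟩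
  rintro _ ⟨C, hC, rfl⟩
  have hCfrob : frob C ≤ √n2 :=
    Real.le_sqrt_of_sq_le (by simpa using frob_sq_le_of_spec_le zero_le_one hC)
  calc minner A C ≤ frob A * frob C := (le_abs_self _).trans (abs_minner_le A C)
    _ ≤ frob A * √n2 := mul_le_mul_of_nonneg_left hCfrob (frob_nonneg A)

theorem isSubgradient_nuc_of_nuc_le_minner {A G : Matrix (Fin n1) (Fin n2) ℝ}
    (hG : spec G ≤ 1) (hA : nuc A ≤ minner A G) : IsSubgradient nuc A G := by
  intro M
  rw [minner_sub_left]
  linarith [minner_le_nuc M hG]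

variable {U : Matrix (Fin n1) (Fin r) ℝ} {V : Matrix (Fin n2) (Fin r) ℝ}
  {W : Matrix (Fin n1) (Fin n2) ℝ}

theorem minner_mul_diagonal_mul_transpose (U : Matrix (Fin n1) (Fin r) ℝ)
    (V : Matrix (Fin n2) (Fin r) ℝ) (σ : Fin r → ℝ) (B : Matrix (Fin n1) (Fin n2) ℝ) :
    minner (U * diagonal σ * Vᵀ) B = ∑ k, σ k * (Uᵀ * B * V) k k := by
  rw [minner_eq_trace, transpose_mul, transpose_mul, transpose_transpose, diagonal_transpose,
    Matrix.mul_assoc, trace_mul_comm, Matrix.mul_assoc, Matrix.mul_assoc, ← Matrix.mul_assoc Uᵀ]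
  simp only [trace, diag, diagonal_mul]

theorem transpose_mul_mul_apply_self_le_one {B : Matrix (Fin n1) (Fin n2) ℝ}
    (hU : Uᵀ * U = 1) (hV : Vᵀ * V = 1) (hB : spec B ≤ 1) (k : Fin r) :
    (Uᵀ * B * V) k k ≤ 1 := by
  have hgram : ((U - B * V)ᵀ * (U - B * V) + (Vᵀ * V - (B * V)ᵀ * (B * V))).PosSemidef :=
    (posSemidef_conjTranspose_mul_self (U - B * V)).add <| by
      simpa using posSemidef_smul_gram_sub_gram_mul zero_le_one hB V
  have hexpand : (U - B * V)ᵀ * (U - B * V) + (Vᵀ * V - (B * V)ᵀ * (B * V)) =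
      Uᵀ * U + Vᵀ * V - Uᵀ * B * V - (Uᵀ * B * V)ᵀ := by
    simp only [transpose_sub, transpose_mul, transpose_transpose, Matrix.sub_mul, Matrix.mul_sub,
      Matrix.mul_assoc]
    abel
  have hdiag := hgram.diag_nonneg (i := k)
  rw [hexpand, hU, hV, Matrix.sub_apply, Matrix.sub_apply, Matrix.add_apply, one_apply_eq,
    transpose_apply] at hdiag
  linarith

theorem nuc_mul_diagonal_mul_transpose_le {σ : Fin r → ℝ} (hU : Uᵀ * U = 1) (hV : Vᵀ * V = 1)
    (hσ : ∀ k, 0 ≤ σ k) : nuc (U * diagonal σ * Vᵀ) ≤ ∑ k, σ k := by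
  refine csSup_le ⟨_, 0, spec_zero_le_one, rfl⟩ ?_
  rintro _ ⟨B, hB, rfl⟩
  rw [minner_mul_diagonal_mul_transpose]
  exact Finset.sum_le_sum fun k _ =>
    mul_le_of_le_one_right (hσ k) (transpose_mul_mul_apply_self_le_one hU hV hB k)

theorem memTperp.transpose_mul_eq_zero (hW : memTperp U V W) : Uᵀ * W = 0 := by
  have h := hW (U * (Uᵀ * W)) ⟨(Uᵀ * W)ᵀ, 0, by simp⟩
  rw [minner_comm, minner_eq_trace, transpose_mul, Matrix.mul_assoc] at h
  exact trace_conjTranspose_mul_self_eq_zero_iff.1 h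

theorem memTperp.mul_eq_zero (hW : memTperp U V W) : W * V = 0 := by
  have h := hW (W * V * Vᵀ) ⟨0, W * V, by simp⟩
  rw [minner_comm, minner_eq_trace, transpose_mul, transpose_transpose, Matrix.mul_assoc,
    trace_mul_comm, Matrix.mul_assoc] at h
  exact trace_conjTranspose_mul_self_eq_zero_iff.1 h

theorem memTperp.gram_mul_transpose_add (hU : Uᵀ * U = 1) (hW : memTperp U V W) :
    (U * Vᵀ + W)ᵀ * (U * Vᵀ + W) = V * Vᵀ + Wᵀ * W := by
  have hWU : Wᵀ * U = 0 := by
    rw [← transpose_transpose U, ← transpose_mul, hW.transpose_mul_eq_zero, transpose_zero]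
  rw [transpose_add, transpose_mul, transpose_transpose, Matrix.add_mul, Matrix.mul_add,
    Matrix.mul_add, Matrix.mul_assoc V, ← Matrix.mul_assoc Uᵀ, hU, Matrix.one_mul,
    Matrix.mul_assoc V, hW.transpose_mul_eq_zero, ← Matrix.mul_assoc Wᵀ, hWU, Matrix.mul_zero,
    Matrix.zero_mul, add_zero, zero_add]

theorem memTperp.spec_mul_transpose_add_le_one (hU : Uᵀ * U = 1) (hV : Vᵀ * V = 1)
    (hW : memTperp U V W) (hWnorm : spec W ≤ 1) : spec (U * Vᵀ + W) ≤ 1 := by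
  have hproj : (1 - V * Vᵀ)ᵀ * (1 - V * Vᵀ) = 1 - V * Vᵀ := by
    have hVV : V * Vᵀ * (V * Vᵀ) = V * Vᵀ := by
      rw [Matrix.mul_assoc, ← Matrix.mul_assoc Vᵀ, hV, Matrix.one_mul]
    simp [Matrix.mul_sub, Matrix.sub_mul, hVV]
  have hWproj : W * (1 - V * Vᵀ) = W := by
    rw [Matrix.mul_sub, Matrix.mul_one, ← Matrix.mul_assoc, hW.mul_eq_zero, Matrix.zero_mul,
      sub_zero]
  have hcontr := posSemidef_smul_gram_sub_gram_mul zero_le_one hWnorm (1 - V * Vᵀ)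
  rw [hproj, hWproj, one_pow, one_smul] at hcontr
  rwa [spec_le_iff_posSemidef zero_le_one, one_pow, one_smul, hW.gram_mul_transpose_add hU,
    ← sub_sub]

theorem memTperp.isSubgradient_nuc {σ : Fin r → ℝ} (hU : Uᵀ * U = 1) (hV : Vᵀ * V = 1)
    (hW : memTperp U V W) (hσ : ∀ k, 0 ≤ σ k) (hWnorm : spec W ≤ 1) :
    IsSubgradient nuc (U * diagonal σ * Vᵀ) (U * Vᵀ + W) := by
  refine isSubgradient_nuc_of_nuc_le_minner (hW.spec_mul_transpose_add_le_one hU hV hWnorm)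
    ((nuc_mul_diagonal_mul_transpose_le hU hV hσ).trans_eq ?_)
  have hcompress : Uᵀ * (U * Vᵀ + W) * V = 1 := by
    rw [Matrix.mul_add, hW.transpose_mul_eq_zero, add_zero, ← Matrix.mul_assoc, hU,
      Matrix.one_mul, hV]
  simp only [minner_mul_diagonal_mul_transpose, hcompress, one_apply_eq, mul_one]

theorem memTperp.frob_sq_mul_transpose_add (hU : Uᵀ * U = 1) (hV : Vᵀ * V = 1)
    (hW : memTperp U V W) :
    frob (U * Vᵀ + W) ^ 2 = r + frob W ^ 2 := by
  rw [frob_sq, frob_sq, minner_eq_trace, minner_eq_trace, hW.gram_mul_transpose_add hU, trace_add,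
    trace_mul_comm, hV, trace_one, Fintype.card_fin]

end Subgradient

section RootPCP

variable {n1 n2 : ℕ} {lam mu : ℝ} {D L0 S0 Z0 Lh Sh : Matrix (Fin n1) (Fin n2) ℝ}

theorem IsRootPCPMin.isStablePCPMin (hmu : 0 ≤ mu) (hmin : IsRootPCPMin D lam mu Lh Sh) :
    IsStablePCPMin D lam (frob (Lh + Sh - D)) Lh Sh := by
  refine ⟨le_rfl, fun L S hLS => ?_⟩
  linarith [hmin L S, mul_le_mul_of_nonneg_left hLS hmu]

theorem IsRootPCPMin.mul_residual_le {G K P : Matrix (Fin n1) (Fin n2) ℝ} (hlam : 0 ≤ lam)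
    (hmin : IsRootPCPMin (L0 + S0 + Z0) lam mu Lh Sh)
    (hG : IsSubgradient nuc L0 G) (hK : IsSubgradient l1norm S0 K) (hcert : G = lam • (K + P)) :
    mu * frob (Lh + Sh - (L0 + S0 + Z0)) ≤ mu * frob Z0 +
      (frob (Lh + Sh - (L0 + S0 + Z0)) + frob Z0) * frob G +
      lam * (frob (Sh - S0) * frob P) := by
  set E := Lh + Sh - (L0 + S0 + Z0) with hE
  have hopt : nuc Lh + lam * l1norm Sh + mu * frob E ≤
      nuc L0 + lam * l1norm S0 + mu * frob Z0 := by
    simpa only [sub_add_cancel_left, frob_neg] using hmin L0 S0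
  have hpair : minner (Lh - L0) G + lam * minner (Sh - S0) K =
      minner (E + Z0) G - lam * minner (Sh - S0) P := by
    have hEZ : E + Z0 = (Lh - L0) + (Sh - S0) := by rw [hE]; abel
    have hsplit : minner (Sh - S0) G = lam * (minner (Sh - S0) K + minner (Sh - S0) P) := by
      rw [hcert, minner_smul_right, minner_add_right]
    rw [hEZ, minner_add_left, hsplit]
    ring
  have hresidual : -minner (E + Z0) G ≤ (frob E + frob Z0) * frob G :=
    calc -minner (E + Z0) G ≤ frob (E + Z0) * frob G :=
          (neg_le_abs _).trans (abs_minner_le _ _)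
      _ ≤ (frob E + frob Z0) * frob G :=
          mul_le_mul_of_nonneg_right (frob_add_le E Z0) (frob_nonneg G)
  have hsparse : lam * minner (Sh - S0) P ≤ lam * (frob (Sh - S0) * frob P) :=
    mul_le_mul_of_nonneg_left ((le_abs_self _).trans (abs_minner_le _ _)) hlam
  linarith [hG Lh, mul_le_mul_of_nonneg_left (hK Sh) hlam]

theorem IsRootPCPMin.residual_le_of_sparse_error_le {G K P : Matrix (Fin n1) (Fin n2) ℝ}
    {a b κ : ℝ} (hlam : 0 ≤ lam) (hmu : 0 < mu) (hmin : IsRootPCPMin (L0 + S0 + Z0) lam mu Lh Sh)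
    (hG : IsSubgradient nuc L0 G) (hK : IsSubgradient l1norm S0 K) (hcert : G = lam • (K + P))
    (hGnorm : frob G ≤ a * mu) (hP : lam * (κ * frob P) ≤ b * mu)
    (hS : frob (Sh - S0) ≤ κ * frob (Lh + Sh - (L0 + S0 + Z0))) :
    (1 - a - b) * frob (Lh + Sh - (L0 + S0 + Z0)) ≤ (1 + a) * frob Z0 := by
  have hres := hmin.mul_residual_le hlam hG hK hcert
  set δ := frob (Lh + Sh - (L0 + S0 + Z0))
  have hδ : 0 ≤ δ := frob_nonneg _
  have hresidual : (δ + frob Z0) * frob G ≤ (δ + frob Z0) * (a * mu) :=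
    mul_le_mul_of_nonneg_left hGnorm (add_nonneg hδ (frob_nonneg Z0))
  have hsparse : lam * (frob (Sh - S0) * frob P) ≤ b * mu * δ :=
    calc lam * (frob (Sh - S0) * frob P) ≤ lam * (κ * δ * frob P) := by
          gcongr
          exact frob_nonneg P
      _ = lam * (κ * frob P) * δ := by ring
      _ ≤ b * mu * δ := mul_le_mul_of_nonneg_right hP hδ
  refine le_of_mul_le_mul_left ?_ hmu
  linarith

end RootPCP

section Constants

variable {n1 n2 r : ℕ} {U : Matrix (Fin n1) (Fin r) ℝ} {V : Matrix (Fin n2) (Fin r) ℝ}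
  {W : Matrix (Fin n1) (Fin n2) ℝ}

-- The squared norm is at most `n2 / 10 + n2 / 4 = 0.7 * (n2 / 2)`, and `0.7 ≤ 0.84 ^ 2`.
theorem memTperp.frob_mul_transpose_add_le (hU : Uᵀ * U = 1) (hV : Vᵀ * V = 1) (hW : memTperp U V W)
    (hr : (r : ℝ) ≤ (n2 : ℝ) / 10) (hWnorm : spec W ≤ 1 / 2) :
    frob (U * Vᵀ + W) ≤ 0.84 * √((n2 : ℝ) / 2) := by
  refine le_of_sq_le_sq ?_ (by positivity)
  rw [hW.frob_sq_mul_transpose_add hU hV, mul_pow, Real.sq_sqrt (by positivity)]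
  linarith [frob_sq_le_of_spec_le (by norm_num) hWnorm]

theorem inv_sqrt_mul_sqrt_mul_le {a b x : ℝ} (ha : 0 < a) (hb : 0 ≤ b)
    (hx : x ≤ 1 / (260 * √2)) : (√a)⁻¹ * (18 * √(a * b) * x) ≤ 0.07 * √(b / 2) :=
  calc (√a)⁻¹ * (18 * √(a * b) * x)
      ≤ (√a)⁻¹ * (18 * √(a * b) * (1 / (260 * √2))) := by gcongr
    _ = 18 / 260 * √(b / 2) := by
        rw [Real.sqrt_mul ha.le, Real.sqrt_div hb]
        field_simp
    _ ≤ 0.07 * √(b / 2) := by gcongr; norm_num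

theorem sqrt_mul_add_le_mul_sqrt {a b c N : ℝ} (hN : 1 ≤ N) (hb : 0 ≤ b) (hc : 0 ≤ c)
    (habc : a + b ≤ c ^ 2) : √(a * N + b) ≤ c * √N := by
  refine Real.sqrt_le_iff.2 ⟨by positivity, ?_⟩
  rw [mul_pow, Real.sq_sqrt (by linarith)]
  calc a * N + b ≤ a * N + b * N := by gcongr; exact le_mul_of_one_le_right hb hN
    _ = (a + b) * N := by ring
    _ ≤ c ^ 2 * N := by gcongr

end Constants

theorem rootPCP_final_bound_general {n1 n2 r : ℕ}
    (hn1 : 1 ≤ n1) (hn2 : 1 ≤ n2) (hr : (r : ℝ) ≤ (n2 : ℝ) / 10)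
    (U : Matrix (Fin n1) (Fin r) ℝ) (V : Matrix (Fin n2) (Fin r) ℝ) (σ : Fin r → ℝ)
    (L0 S0 Z0 : Matrix (Fin n1) (Fin n2) ℝ) (Ω : Finset (Fin n1 × Fin n2))
    (hU : Uᵀ * U = 1) (hV : Vᵀ * V = 1) (hσ : ∀ k, 0 ≤ σ k)
    (hL0 : L0 = U * diagonal σ * Vᵀ)
    (hS0 : ∀ p : Fin n1 × Fin n2, S0 p.1 p.2 ≠ 0 → p ∈ Ω)
    (W F H : Matrix (Fin n1) (Fin n2) ℝ)
    (hcert : U * Vᵀ + W = (√n1)⁻¹ • (signM S0 + F + projS Ω H))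
    (hW : memTperp U V W) (hWnorm : spec W ≤ 1 / 2)
    (hF : projS Ω F = 0) (hFnorm : ∀ i j, |F i j| ≤ 1)
    (hH : frob (projS Ω H) ≤ 1 / (260 * √2))
    (Lh Sh : Matrix (Fin n1) (Fin n2) ℝ)
    (hmin : IsRootPCPMin (L0 + S0 + Z0) (√n1)⁻¹ (√((n2 : ℝ) / 2)) Lh Sh)
    (hi : frob Z0 ≤ frob (Lh + Sh - (L0 + S0 + Z0)) →
      ∀ L S : Matrix (Fin n1) (Fin n2) ℝ,
        IsStablePCPMin (L0 + S0 + Z0) (√n1)⁻¹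
            (frob (Lh + Sh - (L0 + S0 + Z0))) L S →
          pairDist L S L0 S0 ≤
            √(320 * (n1 : ℝ) * n2 + 4) * frob (Lh + Sh - (L0 + S0 + Z0)))
    (hii : frob (Lh + Sh - (L0 + S0 + Z0)) ≤ frob Z0 →
      ∀ L S : Matrix (Fin n1) (Fin n2) ℝ,
        IsStablePCPMin (L0 + S0 + Z0) (√n1)⁻¹
            (frob (Lh + Sh - (L0 + S0 + Z0))) L S →
          pairDist L S L0 S0 ≤ √(720 * (n1 : ℝ) * n2 + 2) * frob Z0) :
    pairDist Lh Sh L0 S0 ≤ 560 * √((n1 : ℝ) * n2) * frob Z0 := by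
  have hN : (1 : ℝ) ≤ n1 * n2 := by exact_mod_cast Nat.mul_pos hn1 hn2
  have hmu : 0 < √((n2 : ℝ) / 2) := by positivity
  have hstable := hmin.isStablePCPMin hmu.le
  rw [mul_assoc] at hi hii
  rcases le_total (frob Z0) (frob (Lh + Sh - (L0 + S0 + Z0))) with hlarge | hsmall
  · -- `18 ^ 2 = 320 + 4`
    have hdist : pairDist Lh Sh L0 S0 ≤
        18 * √((n1 : ℝ) * n2) * frob (Lh + Sh - (L0 + S0 + Z0)) :=
      (hi hlarge Lh Sh hstable).trans <| mul_le_mul_of_nonneg_right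
        (sqrt_mul_add_le_mul_sqrt hN (by norm_num) (by norm_num) (by norm_num)) (frob_nonneg _)
    have hres : (1 - 0.84 - 0.07) * frob (Lh + Sh - (L0 + S0 + Z0)) ≤ (1 + 0.84) * frob Z0 :=
      hmin.residual_le_of_sparse_error_le (by positivity) hmu
        (hL0 ▸ hW.isSubgradient_nuc hU hV hσ (hWnorm.trans (by norm_num)))
        (isSubgradient_l1norm_of_projS_eq_zero hS0 hF hFnorm) hcert
        (hW.frob_mul_transpose_add_le hU hV hr hWnorm)
        (inv_sqrt_mul_sqrt_mul_le (by positivity) n2.cast_nonneg hH)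
        ((frob_le_pairDist ..).trans hdist)
    calc pairDist Lh Sh L0 S0
        ≤ 18 * √((n1 : ℝ) * n2) * frob (Lh + Sh - (L0 + S0 + Z0)) := hdist
      _ ≤ 18 * √((n1 : ℝ) * n2) * (30 * frob Z0) := by gcongr; linarith [frob_nonneg Z0]
      _ = 540 * √((n1 : ℝ) * n2) * frob Z0 := by ring
      _ ≤ 560 * √((n1 : ℝ) * n2) * frob Z0 := by gcongr; exacts [frob_nonneg Z0, by norm_num]
  · exact (hii hsmall Lh Sh hstable).trans <| mul_le_mul_of_nonneg_right
      (sqrt_mul_add_le_mul_sqrt hN (by norm_num) (by norm_num) (by norm_num)) (frob_nonneg _)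

/-- combining the dual certificate with the two StablePCP_c error bounds
yields the final √PCP error bound 560·√(n1·n2)·‖Z0‖_F. -/
theorem rootPCP_final_bound {n1 n2 r : ℕ}
    (hn2 : 1 ≤ n2) (hn : n2 ≤ n1) (hr : (r : ℝ) ≤ (n2 : ℝ) / 10)
    (U : Matrix (Fin n1) (Fin r) ℝ) (V : Matrix (Fin n2) (Fin r) ℝ) (σ : Fin r → ℝ)
    (L0 S0 Z0 : Matrix (Fin n1) (Fin n2) ℝ) (Ω : Finset (Fin n1 × Fin n2))
    (hU : Uᵀ * U = 1) (hV : Vᵀ * V = 1) (hσ : ∀ k, 0 < σ k)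
    (hL0 : L0 = U * Matrix.diagonal σ * Vᵀ)
    (hS0 : ∀ p : Fin n1 × Fin n2, p ∈ Ω ↔ S0 p.1 p.2 ≠ 0)
    (W F H : Matrix (Fin n1) (Fin n2) ℝ)
    (hcert : U * Vᵀ + W = (Real.sqrt n1)⁻¹ • (signM S0 + F + projS Ω H))
    (hW : memTperp U V W) (hWnorm : spec W ≤ 1 / 2)
    (hF : projS Ω F = 0) (hFnorm : ∀ i j, |F i j| ≤ 1 / 2)
    (hH : frob (projS Ω H) ≤ 1 / (260 * Real.sqrt 2))
    (Lh Sh : Matrix (Fin n1) (Fin n2) ℝ)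
    (hmin : IsRootPCPMin (L0 + S0 + Z0) (Real.sqrt n1)⁻¹ (Real.sqrt ((n2 : ℝ) / 2)) Lh Sh)
    (hi : frob Z0 ≤ frob (Lh + Sh - (L0 + S0 + Z0)) →
      ∀ L S : Matrix (Fin n1) (Fin n2) ℝ,
        IsStablePCPMin (L0 + S0 + Z0) (Real.sqrt n1)⁻¹
            (frob (Lh + Sh - (L0 + S0 + Z0))) L S →
          pairDist L S L0 S0 ≤
            Real.sqrt (320 * (n1 : ℝ) * n2 + 4) * frob (Lh + Sh - (L0 + S0 + Z0)))
    (hii : frob (Lh + Sh - (L0 + S0 + Z0)) ≤ frob Z0 →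
      ∀ L S : Matrix (Fin n1) (Fin n2) ℝ,
        IsStablePCPMin (L0 + S0 + Z0) (Real.sqrt n1)⁻¹
            (frob (Lh + Sh - (L0 + S0 + Z0))) L S →
          pairDist L S L0 S0 ≤ Real.sqrt (720 * (n1 : ℝ) * n2 + 2) * frob Z0) :
    pairDist Lh Sh L0 S0 ≤ 560 * Real.sqrt ((n1 : ℝ) * n2) * frob Z0 :=
  rootPCP_final_bound_general (hn2.trans hn) hn2 hr U V σ L0 S0 Z0 Ω hU hV (fun k => (hσ k).le) hL0
    (fun p => (hS0 p).2) W F H hcert hW hWnorm hF (fun i j => (hFnorm i j).trans (by norm_num)) hH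
    Lh Sh hmin hi hii
end

section
/- Fix matrices L1, S1, Z, D, Y1, Y2, Y3 ∈ ℝ^{n1×n2} and ρ > 0. The function (L2, S2) ↦ ⟨L1 − L2, Y1⟩ + (ρ/2)‖L1 − L2‖_F² + ⟨S1 − S2, Y2⟩ + (ρ/2)‖S1 − S2‖_F² + ⟨L2 + S2 + Z − D, Y3⟩ + (ρ/2)‖L2 + S2 + Z − D‖_F² over pairs of real n1×n2 matrices has a unique minimizer, given by L2 = (D − Z + 2L1 − S1 + (2Y1 − Y2 − Y3)/ρ)/3 and S2 = (D − Z + 2S1 − L1 + (2Y2 − Y1 − Y3)/ρ)/3. -/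
open Matrix
open scoped BigOperators

/-- The augmented-Lagrangian objective of the joint (L2, S2) ADMM update. -/
noncomputable def admmObj {n1 n2 : ℕ} (L1 S1 Z D Y1 Y2 Y3 : Matrix (Fin n1) (Fin n2) ℝ)
    (ρ : ℝ) (L2 S2 : Matrix (Fin n1) (Fin n2) ℝ) : ℝ :=
  minner (L1 - L2) Y1 + (ρ / 2) * frob (L1 - L2) ^ 2 +
    minner (S1 - S2) Y2 + (ρ / 2) * frob (S1 - S2) ^ 2 +
    minner (L2 + S2 + Z - D) Y3 + (ρ / 2) * frob (L2 + S2 + Z - D) ^ 2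

/-!
Everything happens in a real inner product space. Each residual `x` with multiplier `y` contributes
a quadratic `⟪x, y⟫ + (ρ / 2) ‖x‖ ^ 2`, whose gradient in `x` is `y + ρ x` and whose second-order
part is `(ρ / 2) ‖h‖ ^ 2`. At the claimed minimizer the gradients of the three terms coincide, so
that the linear parts cancel and a displacement `(h, k)` increases the objective by exactly
`(ρ / 2) (‖h‖ ^ 2 + ‖k‖ ^ 2 + ‖h + k‖ ^ 2)`.
-/

section InnerProductSpace

open scoped RealInnerProductSpace

variable {E : Type*} [NormedAddCommGroup E] [InnerProductSpace ℝ E]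

/-- The augmented-Lagrangian term of a constraint residual `x` with multiplier `y` and penalty
parameter `ρ`. -/
noncomputable def augTerm (ρ : ℝ) (y x : E) : ℝ :=
  ⟪x, y⟫ + ρ / 2 * ‖x‖ ^ 2

/-- The augmented Lagrangian, as a function of `(u, v)`, of the constraints `a = u`, `b = v` and
`u + v = c` with multipliers `y₁`, `y₂`, `y₃`. -/
noncomputable def splittingObj (ρ : ℝ) (a b c y₁ y₂ y₃ u v : E) : ℝ :=
  augTerm ρ y₁ (a - u) + augTerm ρ y₂ (b - v) + augTerm ρ y₃ (u + v - c)

/-- The first component of the minimizer of `splittingObj ρ a b c y₁ y₂ y₃`; by symmetry the second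
one is `splittingUpdate ρ b a c y₂ y₁ y₃`. -/
noncomputable def splittingUpdate (ρ : ℝ) (a b c y₁ y₂ y₃ : E) : E :=
  (3 : ℝ)⁻¹ • (c + (2 : ℝ) • a - b + ρ⁻¹ • ((2 : ℝ) • y₁ - y₂ - y₃))

theorem augTerm_add (ρ : ℝ) (y x h : E) :
    augTerm ρ y (x + h) = augTerm ρ y x + ⟪h, y + ρ • x⟫ + ρ / 2 * ‖h‖ ^ 2 := by
  simp only [augTerm, norm_add_sq_real, inner_add_left, inner_add_right, inner_smul_right,
    real_inner_comm h x]
  ring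

theorem augTerm_sub (ρ : ℝ) (y x h : E) :
    augTerm ρ y (x - h) = augTerm ρ y x - ⟪h, y + ρ • x⟫ + ρ / 2 * ‖h‖ ^ 2 := by
  rw [sub_eq_add_neg, augTerm_add, inner_neg_left, norm_neg, ← sub_eq_add_neg]

theorem splittingObj_eq_add_of_stationary {ρ : ℝ} {a b c y₁ y₂ y₃ u₀ v₀ : E}
    (hu₀ : y₁ + ρ • (a - u₀) = y₃ + ρ • (u₀ + v₀ - c))
    (hv₀ : y₂ + ρ • (b - v₀) = y₃ + ρ • (u₀ + v₀ - c)) (u v : E) :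
    splittingObj ρ a b c y₁ y₂ y₃ u v = splittingObj ρ a b c y₁ y₂ y₃ u₀ v₀ +
      ρ / 2 * (‖u - u₀‖ ^ 2 + ‖v - v₀‖ ^ 2 + ‖u - u₀ + (v - v₀)‖ ^ 2) := by
  have ha : a - u = a - u₀ - (u - u₀) := by abel
  have hb : b - v = b - v₀ - (v - v₀) := by abel
  have hc : u + v - c = u₀ + v₀ - c + (u - u₀ + (v - v₀)) := by abel
  rw [splittingObj, ha, hb, hc, augTerm_sub ρ y₁ (a - u₀), augTerm_sub ρ y₂ (b - v₀),
    augTerm_add, hu₀, hv₀, inner_add_left (u - u₀), splittingObj]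
  ring

theorem splittingUpdate_stationary {ρ : ℝ} (hρ : ρ ≠ 0) (a b c y₁ y₂ y₃ : E) :
    y₁ + ρ • (a - splittingUpdate ρ a b c y₁ y₂ y₃) =
      y₃ + ρ • (splittingUpdate ρ a b c y₁ y₂ y₃ + splittingUpdate ρ b a c y₂ y₁ y₃ - c) := by
  unfold splittingUpdate
  match_scalars <;> field_simp <;> ring

theorem admm_update_minimizer_general {ρ : ℝ} (hρ : 0 < ρ) (a b c y₁ y₂ y₃ u₀ v₀ : E)
    (hu₀ : u₀ = splittingUpdate ρ a b c y₁ y₂ y₃) (hv₀ : v₀ = splittingUpdate ρ b a c y₂ y₁ y₃) :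
    (∀ u v, splittingObj ρ a b c y₁ y₂ y₃ u₀ v₀ ≤ splittingObj ρ a b c y₁ y₂ y₃ u v) ∧
    (∀ u v, (∀ u' v', splittingObj ρ a b c y₁ y₂ y₃ u v ≤ splittingObj ρ a b c y₁ y₂ y₃ u' v') →
      u = u₀ ∧ v = v₀) := by
  have hstat_u := splittingUpdate_stationary hρ.ne' a b c y₁ y₂ y₃
  have hstat_v := splittingUpdate_stationary hρ.ne' b a c y₂ y₁ y₃
  rw [← hu₀, ← hv₀] at hstat_u hstat_v
  rw [add_comm v₀] at hstat_v
  have hobj := splittingObj_eq_add_of_stationary hstat_u hstat_v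
  refine ⟨fun u v => ?_, fun u v hmin => ?_⟩
  · rw [hobj u v]
    exact le_add_of_nonneg_right (by positivity)
  · have hle := hmin u₀ v₀
    rw [hobj u v, add_le_iff_nonpos_right] at hle
    have hsq := nonpos_of_mul_nonpos_right hle (half_pos hρ)
    have hu : ‖u - u₀‖ ^ 2 = 0 := by
      linarith [sq_nonneg ‖u - u₀‖, sq_nonneg ‖v - v₀‖, sq_nonneg ‖u - u₀ + (v - v₀)‖]
    have hv : ‖v - v₀‖ ^ 2 = 0 := by
      linarith [sq_nonneg ‖u - u₀‖, sq_nonneg ‖v - v₀‖, sq_nonneg ‖u - u₀ + (v - v₀)‖]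
    exact ⟨sub_eq_zero.1 (norm_eq_zero.1 (sq_eq_zero_iff.1 hu)),
      sub_eq_zero.1 (norm_eq_zero.1 (sq_eq_zero_iff.1 hv))⟩

end InnerProductSpace

section Frobenius

open scoped Matrix.Norms.Frobenius InnerProductSpace

theorem frobenius_norm_eq_sqrt {m n α : Type*} [Fintype m] [Fintype n] [SeminormedAddCommGroup α]
    (A : Matrix m n α) : ‖A‖ = √(∑ i, ∑ j, ‖A i j‖ ^ 2) := by
  simp only [frobenius_norm_def, Real.sqrt_eq_rpow, Real.rpow_two]

/-- The inner product on matrices that induces Mathlib's Frobenius norm. -/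
noncomputable abbrev frobeniusInnerProductSpace {𝕜 m n α : Type*} [RCLike 𝕜] [Fintype m]
    [Fintype n] [NormedAddCommGroup α] [InnerProductSpace 𝕜 α] :
    InnerProductSpace 𝕜 (Matrix m n α) where
  inner A B := ∑ i, ∑ j, ⟪A i j, B i j⟫_𝕜
  norm_sq_eq_re_inner A := by
    rw [frobenius_norm_eq_sqrt, Real.sq_sqrt (by positivity)]
    simp only [map_sum, norm_sq_eq_re_inner (𝕜 := 𝕜)]
  conj_inner_symm A B := by simp only [map_sum, inner_conj_symm]
  add_left A B C := by simp only [Matrix.add_apply, inner_add_left, Finset.sum_add_distrib]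
  smul_left A B r := by simp only [Matrix.smul_apply, inner_smul_left, Finset.mul_sum]

attribute [local instance] frobeniusInnerProductSpace

theorem frobenius_inner_def {𝕜 m n α : Type*} [RCLike 𝕜] [Fintype m] [Fintype n]
    [NormedAddCommGroup α] [InnerProductSpace 𝕜 α] (A B : Matrix m n α) :
    ⟪A, B⟫_𝕜 = ∑ i, ∑ j, ⟪A i j, B i j⟫_𝕜 :=
  rfl

variable {n1 n2 : ℕ}

theorem frob_eq_norm (A : Matrix (Fin n1) (Fin n2) ℝ) : frob A = ‖A‖ := by
  simp only [frob, frobenius_norm_eq_sqrt, Real.norm_eq_abs, sq_abs]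

theorem minner_eq_inner (A B : Matrix (Fin n1) (Fin n2) ℝ) : minner A B = ⟪A, B⟫_ℝ := by
  simp only [minner, frobenius_inner_def, RCLike.inner_apply, conj_trivial, mul_comm]

theorem admmObj_eq_splittingObj (L1 S1 Z D Y1 Y2 Y3 : Matrix (Fin n1) (Fin n2) ℝ) (ρ : ℝ) :
    admmObj L1 S1 Z D Y1 Y2 Y3 ρ = splittingObj ρ L1 S1 (D - Z) Y1 Y2 Y3 := by
  funext L2 S2
  simp only [admmObj, splittingObj, augTerm, frob_eq_norm, minner_eq_inner, ← sub_add,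
    sub_add_eq_add_sub, add_assoc]

end Frobenius

/-- the joint (L2, S2) ADMM update has the stated unique minimizer. -/
theorem admm_update_minimizer {n1 n2 : ℕ}
    (L1 S1 Z D Y1 Y2 Y3 : Matrix (Fin n1) (Fin n2) ℝ) (ρ : ℝ) (hρ : 0 < ρ)
    (L2s S2s : Matrix (Fin n1) (Fin n2) ℝ)
    (hL2s : L2s = (3 : ℝ)⁻¹ •
      (D - Z + (2 : ℝ) • L1 - S1 + ρ⁻¹ • ((2 : ℝ) • Y1 - Y2 - Y3)))
    (hS2s : S2s = (3 : ℝ)⁻¹ •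
      (D - Z + (2 : ℝ) • S1 - L1 + ρ⁻¹ • ((2 : ℝ) • Y2 - Y1 - Y3))) :
    (∀ L2 S2 : Matrix (Fin n1) (Fin n2) ℝ,
      admmObj L1 S1 Z D Y1 Y2 Y3 ρ L2s S2s ≤ admmObj L1 S1 Z D Y1 Y2 Y3 ρ L2 S2) ∧
    (∀ L2 S2 : Matrix (Fin n1) (Fin n2) ℝ,
      (∀ L S : Matrix (Fin n1) (Fin n2) ℝ,
        admmObj L1 S1 Z D Y1 Y2 Y3 ρ L2 S2 ≤ admmObj L1 S1 Z D Y1 Y2 Y3 ρ L S) →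
      L2 = L2s ∧ S2 = S2s) := by
  rw [admmObj_eq_splittingObj]
  exact @admm_update_minimizer_general _ frobeniusNormedAddCommGroup frobeniusInnerProductSpace
    ρ hρ L1 S1 (D - Z) Y1 Y2 Y3 L2s S2s hL2s hS2s
end
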